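/- arXiv:2011.13652 — 4 statements merged into one kernel-verified Lean document; each statement's English description precedes it below -/
import Mathlib

section
/- Let c > 0, m_L ≤ m ≤ m_U and τ_L ≤ τ ≤ τ_U. If w satisfies all four McCormick envelope inequalities for the product c·m·τ with bounds m ∈ [m_L, m_U], τ ∈ [τ_L, τ_U], then the violation of the bilinear constraint is bounded by |w − c·m·τ| ≤ c·(m_U − m_L)·(τ_U − τ_L)/4. -/
/-!
Write `a = m - mL`, `b = mU - m`, `p = τ - τL`, `q = τU - τ`. The two underestimators say that
`x = c * m * τ - w` is at most both `c * a * p` and `c * b * q`. Weighting these bounds by `b` and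
`a` gives `(a + b) * x ≤ c * a * b * (p + q)`, and `4 * a * b ≤ (a + b) ^ 2` concludes. The
reflection `τ ↦ -τ`, `w ↦ -w` exchanges under- and overestimators.
-/

section OrderedRing

variable {R : Type*} [CommRing R] [LinearOrder R] [IsStrictOrderedRing R]

theorem four_mul_le_add_mul_add_of_le_mul_of_le_mul {a b p q x : R} (ha : 0 ≤ a) (hb : 0 ≤ b)
    (hpq : 0 ≤ p + q) (hap : x ≤ a * p) (hbq : x ≤ b * q) :
    4 * x ≤ (a + b) * (p + q) := by
  obtain hab | hab := (add_nonneg ha hb).eq_or_lt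
  · obtain ⟨rfl, rfl⟩ := (add_eq_zero_iff_of_nonneg ha hb).1 hab.symm
    linarith
  · refine le_of_mul_le_mul_left ?_ hab
    calc (a + b) * (4 * x) = 4 * (b * x + a * x) := by ring
      _ ≤ 4 * (b * (a * p) + a * (b * q)) := by gcongr
      _ = 4 * a * b * (p + q) := by ring
      _ ≤ (a + b) ^ 2 * (p + q) := by gcongr; exact four_mul_le_sq_add a b
      _ = (a + b) * ((a + b) * (p + q)) := by ring

variable {c mL mU τL τU m τ w : R}

theorem four_mul_sub_le_of_mccormick_underestimators (hc : 0 ≤ c)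
    (hmL : mL ≤ m) (hmU : m ≤ mU) (hτ : τL ≤ τU)
    (hLL : c * (mL * τ + τL * m - mL * τL) ≤ w)
    (hUU : c * (mU * τ + τU * m - mU * τU) ≤ w) :
    4 * (c * m * τ - w) ≤ c * (mU - mL) * (τU - τL) := by
  have hwidth : 0 ≤ c * (τ - τL) + c * (τU - τ) := by
    linarith [mul_nonneg hc (sub_nonneg.2 hτ)]
  have hgapL : c * m * τ - w ≤ (m - mL) * (c * (τ - τL)) := by linarith
  have hgapU : c * m * τ - w ≤ (mU - m) * (c * (τU - τ)) := by linarith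
  calc 4 * (c * m * τ - w)
      ≤ (m - mL + (mU - m)) * (c * (τ - τL) + c * (τU - τ)) :=
        four_mul_le_add_mul_add_of_le_mul_of_le_mul (sub_nonneg.2 hmL) (sub_nonneg.2 hmU)
          hwidth hgapL hgapU
    _ = c * (mU - mL) * (τU - τL) := by ring

theorem four_mul_sub_le_of_mccormick_overestimators (hc : 0 ≤ c)
    (hmL : mL ≤ m) (hmU : m ≤ mU) (hτ : τL ≤ τU)
    (hUL : w ≤ c * (mU * τ + τL * m - mU * τL))
    (hLU : w ≤ c * (mL * τ + τU * m - mL * τU)) :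
    4 * (w - c * m * τ) ≤ c * (mU - mL) * (τU - τL) := by
  have hreflected : 4 * (c * m * -τ - -w) ≤ c * (mU - mL) * (-τL - -τU) :=
    four_mul_sub_le_of_mccormick_underestimators hc hmL hmU (neg_le_neg hτ)
      (by linarith) (by linarith)
  linarith

end OrderedRing

theorem mccormick_gap_bound_general {K : Type*} [Field K] [LinearOrder K] [IsStrictOrderedRing K]
    {c mL mU τL τU m τ w : K} (hc : 0 ≤ c)
    (hmL : mL ≤ m) (hmU : m ≤ mU) (hτ : τL ≤ τU)
    (hLL : c * (mL * τ + τL * m - mL * τL) ≤ w)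
    (hUU : c * (mU * τ + τU * m - mU * τU) ≤ w)
    (hUL : w ≤ c * (mU * τ + τL * m - mU * τL))
    (hLU : w ≤ c * (mL * τ + τU * m - mL * τU)) :
    |w - c * m * τ| ≤ c * (mU - mL) * (τU - τL) / 4 := by
  have hunder := four_mul_sub_le_of_mccormick_underestimators hc hmL hmU hτ hLL hUU
  have hover := four_mul_sub_le_of_mccormick_overestimators hc hmL hmU hτ hUL hLU
  rw [abs_sub_le_iff]
  constructor <;> linarith

/-- Any point of the McCormick relaxation violates the bilinear
constraint by at most `c·(mU − mL)·(τU − τL)/4`. -/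
theorem mccormick_gap_bound
    (c mL mU τL τU m τ w : ℝ)
    (hc : 0 < c)
    (hmL : mL ≤ m) (hmU : m ≤ mU) (hτL : τL ≤ τ) (hτU : τ ≤ τU)
    (h1 : w ≥ c * (mL * τ + τL * m - mL * τL))
    (h2 : w ≥ c * (mU * τ + τU * m - mU * τU))
    (h3 : w ≤ c * (mU * τ + τL * m - mU * τL))
    (h4 : w ≤ c * (mL * τ + τU * m - mL * τU)) :
    |w - c * m * τ| ≤ c * (mU - mL) * (τU - τL) / 4 :=
  mccormick_gap_bound_general hc.le hmL hmU (hτL.trans hτU) h1 h2 h3 h4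
end

section
/- Let Δx ≥ 0 and Δy ≥ 0, and let a ∈ [0, Δx], b ∈ [0, Δy]. Then min(a·b, (Δx − a)·(Δy − b)) ≤ Δx·Δy/4. -/
/-! A weighted average of `a * b` and `(Δx - a) * (Δy - b)` bounds their minimum. With weights
proportional to `Δx - a` and `a`, the variable `b` cancels from the average, leaving
`a * (Δx - a) * Δy / Δx`, which AM-GM bounds by `Δx * Δy / 4`. -/

section OrderedRing

variable {R : Type*} [CommRing R] [LinearOrder R] [IsOrderedRing R]

theorem add_mul_min_le {s t : R} (hs : 0 ≤ s) (ht : 0 ≤ t) (x y : R) :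
    (s + t) * min x y ≤ s * x + t * y := by
  rw [add_mul]
  exact add_le_add (mul_le_mul_of_nonneg_left (min_le_left x y) hs)
    (mul_le_mul_of_nonneg_left (min_le_right x y) ht)

theorem add_mul_min_mul_mul_le {a c : R} (ha : 0 ≤ a) (hc : 0 ≤ c) (b d : R) :
    (a + c) * min (a * b) (c * d) ≤ a * c * (b + d) :=
  calc (a + c) * min (a * b) (c * d)
      = (c + a) * min (a * b) (c * d) := by rw [add_comm a c]
    _ ≤ c * (a * b) + a * (c * d) := add_mul_min_le hc ha _ _
    _ = a * c * (b + d) := by ring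

end OrderedRing

section OrderedField

variable {K : Type*} [Field K] [LinearOrder K] [IsStrictOrderedRing K]

theorem min_mul_mul_le_add_mul_add_div_four {a c b d : K} (ha : 0 ≤ a) (hc : 0 ≤ c)
    (hbd : 0 ≤ b + d) : min (a * b) (c * d) ≤ (a + c) * (b + d) / 4 := by
  rcases (add_nonneg ha hc).eq_or_lt' with hac | hac
  · obtain ⟨rfl, rfl⟩ := (add_eq_zero_iff_of_nonneg ha hc).mp hac
    simp
  · have amgm : a * c ≤ (a + c) ^ 2 / 4 := by linarith [four_mul_le_sq_add a c]
    refine le_of_mul_le_mul_left ?_ hac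
    calc (a + c) * min (a * b) (c * d)
        ≤ a * c * (b + d) := add_mul_min_mul_mul_le ha hc b d
      _ ≤ (a + c) ^ 2 / 4 * (b + d) := mul_le_mul_of_nonneg_right amgm hbd
      _ = (a + c) * ((a + c) * (b + d) / 4) := by ring

theorem min_prod_le_quarter_general {Δx Δy a : K} (hΔy : 0 ≤ Δy) (ha0 : 0 ≤ a) (ha : a ≤ Δx)
    (b : K) : min (a * b) ((Δx - a) * (Δy - b)) ≤ Δx * Δy / 4 := by
  have hsum : 0 ≤ b + (Δy - b) := by rwa [add_sub_cancel]
  simpa only [add_sub_cancel] using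
    min_mul_mul_le_add_mul_add_div_four ha0 (sub_nonneg.mpr ha) hsum

end OrderedField

/-- key auxiliary inequality:
`min(a·b, (Δx − a)·(Δy − b)) ≤ Δx·Δy/4`. -/
theorem min_prod_le_quarter
    (Δx Δy a b : ℝ)
    (hΔx : 0 ≤ Δx) (hΔy : 0 ≤ Δy)
    (ha0 : 0 ≤ a) (ha : a ≤ Δx) (hb0 : 0 ≤ b) (hb : b ≤ Δy) :
    min (a * b) ((Δx - a) * (Δy - b)) ≤ Δx * Δy / 4 :=
  min_prod_le_quarter_general hΔy ha0 ha b
end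

section
/- Let x_L ≤ x_U and y_L ≤ y_U be real numbers. The McCormick set M = {(x, y, w) ∈ ℝ³ : x_L ≤ x ≤ x_U, y_L ≤ y ≤ y_U, w ≥ x_L·y + y_L·x − x_L·y_L, w ≥ x_U·y + y_U·x − x_U·y_U, w ≤ x_U·y + y_L·x − x_U·y_L, w ≤ x_L·y + y_U·x − x_L·y_U} equals the convex hull in ℝ³ of the bilinear graph {(x, y, x·y) : x ∈ [x_L, x_U], y ∈ [y_L, y_U]}. -/
/-!
For a corner `(u, v)` of the box, replace the product `x * y` in `(x - u) * (y - v)` by the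
variable `w`. The resulting function is affine in `(x, y, w)` and agrees with `(x - u) * (y - v)`
on the bilinear graph, so the sign of that product over the box is a valid affine inequality: these
are the four McCormick inequalities. Conversely, up to the factor `(xU - xL) * (yU - yL)`, the four
slacks are the barycentric coordinates of a point with respect to the points of the graph above the
corners, each slack being the weight of the opposite corner.
-/

open Set

section OrderedRing

variable {R : Type*} [CommRing R]

/-- The linearization of `(x - u) * (y - v)`, with `w` in place of `x * y`, as an affine function of
`p = (x, y, w)`. Its signs at the corners `(u, v)` of a box are the McCormick inequalities. -/
def linearizedProduct (u v : R) : R × R × R →ᵃ[R] R where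
  toFun p := p.2.2 - u * p.2.1 - v * p.1 + u * v
  linear := LinearMap.snd R R R ∘ₗ LinearMap.snd R R (R × R) -
    u • LinearMap.fst R R R ∘ₗ LinearMap.snd R R (R × R) - v • LinearMap.fst R R (R × R)
  map_vadd' p q := by
    simp only [vadd_eq_add, Prod.fst_add, Prod.snd_add, LinearMap.sub_apply, LinearMap.smul_apply,
      LinearMap.coe_comp, Function.comp_apply, LinearMap.fst_apply, LinearMap.snd_apply,
      smul_eq_mul]
    ring

theorem linearizedProduct_apply (u v : R) (p : R × R × R) :
    linearizedProduct u v p = p.2.2 - u * p.2.1 - v * p.1 + u * v :=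
  rfl

theorem linearizedProduct_eq_sub_add_mul (u v : R) (p : R × R × R) :
    linearizedProduct u v p = p.2.2 - p.1 * p.2.1 + (p.1 - u) * (p.2.1 - v) := by
  rw [linearizedProduct_apply]
  ring

theorem linearizedProduct_mk_mul (u v x y : R) :
    linearizedProduct u v (x, y, x * y) = (x - u) * (y - v) := by
  rw [linearizedProduct_eq_sub_add_mul, sub_self, zero_add]

theorem sum_linearizedProduct_corners (xL xU yL yU : R) (p : R × R × R) :
    linearizedProduct xU yU p + -linearizedProduct xU yL p + -linearizedProduct xL yU p +
      linearizedProduct xL yL p = (xU - xL) * (yU - yL) := by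
  simp only [linearizedProduct_apply]
  ring

theorem sum_linearizedProduct_smul_corners (xL xU yL yU : R) (p : R × R × R) :
    linearizedProduct xU yU p • (xL, yL, xL * yL) +
      -linearizedProduct xU yL p • (xL, yU, xL * yU) +
      -linearizedProduct xL yU p • (xU, yL, xU * yL) +
      linearizedProduct xL yL p • (xU, yU, xU * yU) = ((xU - xL) * (yU - yL)) • p := by
  ext <;>
    simp only [linearizedProduct_apply, Prod.smul_mk, Prod.mk_add_mk, Prod.smul_fst, Prod.smul_snd,
      smul_eq_mul] <;>
    ring

variable [LinearOrder R]

/-- The graph of `(x, y) ↦ x * y` over the box `[xL, xU] × [yL, yU]`. -/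
def bilinearGraph (xL xU yL yU : R) : Set (R × R × R) :=
  {p | ∃ x ∈ Icc xL xU, ∃ y ∈ Icc yL yU, p = (x, y, x * y)}

/-- The McCormick relaxation of `w = x * y` over the box `[xL, xU] × [yL, yU]`, as a set of points
`p = (x, y, w)`. -/
def mccormickSet (xL xU yL yU : R) : Set (R × R × R) :=
  {p | xL ≤ p.1 ∧ p.1 ≤ xU ∧ yL ≤ p.2.1 ∧ p.2.1 ≤ yU ∧
    p.2.2 ≥ xL * p.2.1 + yL * p.1 - xL * yL ∧
    p.2.2 ≥ xU * p.2.1 + yU * p.1 - xU * yU ∧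
    p.2.2 ≤ xU * p.2.1 + yL * p.1 - xU * yL ∧
    p.2.2 ≤ xL * p.2.1 + yU * p.1 - xL * yU}

variable {xL xU yL yU : R} {p : R × R × R}

theorem mk_mul_mem_bilinearGraph {x y : R} (hx : x ∈ Icc xL xU) (hy : y ∈ Icc yL yU) :
    (x, y, x * y) ∈ bilinearGraph xL xU yL yU :=
  ⟨x, hx, y, hy, rfl⟩

variable [IsStrictOrderedRing R]

theorem mem_mccormickSet_iff_linearizedProduct :
    p ∈ mccormickSet xL xU yL yU ↔
      (p.1 ∈ Icc xL xU ∧ p.2.1 ∈ Icc yL yU) ∧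
      (0 ≤ linearizedProduct xL yL p ∧ 0 ≤ linearizedProduct xU yU p) ∧
      linearizedProduct xU yL p ≤ 0 ∧ linearizedProduct xL yU p ≤ 0 := by
  simp only [mccormickSet, mem_ofPred_eq, mem_Icc, linearizedProduct_apply]
  constructor
  · rintro ⟨hxL, hxU, hyL, hyU, hLL, hUU, hUL, hLU⟩
    refine ⟨⟨⟨hxL, hxU⟩, hyL, hyU⟩, ⟨?_, ?_⟩, ?_, ?_⟩ <;> linarith
  · rintro ⟨⟨⟨hxL, hxU⟩, hyL, hyU⟩, ⟨hLL, hUU⟩, hUL, hLU⟩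
    refine ⟨hxL, hxU, hyL, hyU, ?_, ?_, ?_, ?_⟩ <;> linarith

theorem convex_mccormickSet (xL xU yL yU : R) : Convex R (mccormickSet xL xU yL yU) := by
  have mccormickSet_eq_inter : mccormickSet xL xU yL yU =
      (LinearMap.fst R R (R × R) ⁻¹' Icc xL xU ∩
        (LinearMap.fst R R R ∘ₗ LinearMap.snd R R (R × R)) ⁻¹' Icc yL yU) ∩
      ((linearizedProduct xL yL ⁻¹' Ici 0 ∩ linearizedProduct xU yU ⁻¹' Ici 0) ∩
        (linearizedProduct xU yL ⁻¹' Iic 0 ∩ linearizedProduct xL yU ⁻¹' Iic 0)) :=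
    Set.ext fun _ => mem_mccormickSet_iff_linearizedProduct
  rw [mccormickSet_eq_inter]
  have convex_box := ((convex_Icc xL xU).linear_preimage (LinearMap.fst R R (R × R))).inter
    ((convex_Icc yL yU).linear_preimage (LinearMap.fst R R R ∘ₗ LinearMap.snd R R (R × R)))
  have convex_nonneg (u v : R) : Convex R (linearizedProduct u v ⁻¹' Ici 0) :=
    (convex_Ici 0).affine_preimage _
  have convex_nonpos (u v : R) : Convex R (linearizedProduct u v ⁻¹' Iic 0) :=
    (convex_Iic 0).affine_preimage _
  exact convex_box.inter <|
    ((convex_nonneg _ _).inter (convex_nonneg _ _)).inter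
      ((convex_nonpos _ _).inter (convex_nonpos _ _))

theorem bilinearGraph_subset_mccormickSet (xL xU yL yU : R) :
    bilinearGraph xL xU yL yU ⊆ mccormickSet xL xU yL yU := by
  rintro _ ⟨x, hx, y, hy, rfl⟩
  simp only [mem_mccormickSet_iff_linearizedProduct, linearizedProduct_mk_mul]
  have hxL : 0 ≤ x - xL := sub_nonneg.2 hx.1
  have hxU : x - xU ≤ 0 := sub_nonpos.2 hx.2
  have hyL : 0 ≤ y - yL := sub_nonneg.2 hy.1
  have hyU : y - yU ≤ 0 := sub_nonpos.2 hy.2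
  exact ⟨⟨hx, hy⟩, ⟨mul_nonneg hxL hyL, mul_nonneg_of_nonpos_of_nonpos hxU hyU⟩,
    mul_nonpos_of_nonpos_of_nonneg hxU hyL, mul_nonpos_of_nonneg_of_nonpos hxL hyU⟩

theorem mem_bilinearGraph_of_mem_mccormickSet_of_degenerate
    (hp : p ∈ mccormickSet xL xU yL yU) (hbox : xL = xU ∨ yL = yU) :
    p ∈ bilinearGraph xL xU yL yU := by
  obtain ⟨⟨hx, hy⟩, ⟨hLL, -⟩, hUL, hLU⟩ := mem_mccormickSet_iff_linearizedProduct.1 hp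
  suffices hw : p.2.2 = p.1 * p.2.1 from ⟨p.1, hx, p.2.1, hy, by rw [← hw]⟩
  rw [linearizedProduct_eq_sub_add_mul] at hLL hUL hLU
  rcases hbox with rfl | rfl
  · have hx_eq : p.1 = xL := le_antisymm hx.2 hx.1
    rw [hx_eq, sub_self, zero_mul, add_zero] at hLL hLU
    rw [hx_eq]
    exact sub_eq_zero.1 (le_antisymm hLU hLL)
  · have hy_eq : p.2.1 = yL := le_antisymm hy.2 hy.1
    rw [hy_eq, sub_self, mul_zero, add_zero] at hLL hUL
    rw [hy_eq]
    exact sub_eq_zero.1 (le_antisymm hUL hLL)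

end OrderedRing

section OrderedField

variable {K : Type*} [Field K] [LinearOrder K] [IsStrictOrderedRing K]
  {xL xU yL yU : K} {p : K × K × K}

theorem mem_convexHull_bilinearGraph_of_mem_mccormickSet_of_lt
    (hx : xL < xU) (hy : yL < yU) (hp : p ∈ mccormickSet xL xU yL yU) :
    p ∈ convexHull K (bilinearGraph xL xU yL yU) := by
  obtain ⟨-, ⟨hLL, hUU⟩, hUL, hLU⟩ := mem_mccormickSet_iff_linearizedProduct.1 hp
  let weight : Fin 4 → K := ![linearizedProduct xU yU p, -linearizedProduct xU yL p,
    -linearizedProduct xL yU p, linearizedProduct xL yL p]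
  let vertex : Fin 4 → K × K × K :=
    ![(xL, yL, xL * yL), (xL, yU, xL * yU), (xU, yL, xU * yL), (xU, yU, xU * yU)]
  have weight_nonneg : ∀ i, 0 ≤ weight i := by
    simp [weight, Fin.forall_fin_succ, hLL, hUU, hUL, hLU]
  have vertex_mem : ∀ i, vertex i ∈ bilinearGraph xL xU yL yU := by
    simp [vertex, Fin.forall_fin_succ, mk_mul_mem_bilinearGraph, hx.le, hy.le]
  have area_pos : 0 < (xU - xL) * (yU - yL) := mul_pos (sub_pos.2 hx) (sub_pos.2 hy)
  have sum_weight : ∑ i, weight i = (xU - xL) * (yU - yL) := by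
    rw [Fin.sum_univ_four]
    exact sum_linearizedProduct_corners xL xU yL yU p
  have sum_weight_smul : ∑ i, weight i • vertex i = ((xU - xL) * (yU - yL)) • p := by
    rw [Fin.sum_univ_four]
    exact sum_linearizedProduct_smul_corners xL xU yL yU p
  have centerMass_eq : Finset.univ.centerMass weight vertex = p := by
    rw [Finset.centerMass, sum_weight, sum_weight_smul, inv_smul_smul₀ area_pos.ne']
  rw [← centerMass_eq]
  exact Finset.centerMass_mem_convexHull _ (fun i _ => weight_nonneg i)
    (sum_weight ▸ area_pos) (fun i _ => vertex_mem i)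

theorem mccormickSet_subset_convexHull_bilinearGraph (xL xU yL yU : K) :
    mccormickSet xL xU yL yU ⊆ convexHull K (bilinearGraph xL xU yL yU) := by
  intro p hp
  obtain ⟨⟨hx, hy⟩, -⟩ := mem_mccormickSet_iff_linearizedProduct.1 hp
  by_cases hbox : xL = xU ∨ yL = yU
  · exact subset_convexHull K _ (mem_bilinearGraph_of_mem_mccormickSet_of_degenerate hp hbox)
  · obtain ⟨hx_ne, hy_ne⟩ := not_or.1 hbox
    exact mem_convexHull_bilinearGraph_of_mem_mccormickSet_of_lt
      ((hx.1.trans hx.2).lt_of_ne hx_ne) ((hy.1.trans hy.2).lt_of_ne hy_ne) hp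

theorem mccormick_eq_convexHull_bilinear_graph_general (xL xU yL yU : K) :
    mccormickSet xL xU yL yU = convexHull K (bilinearGraph xL xU yL yU) :=
  (mccormickSet_subset_convexHull_bilinearGraph xL xU yL yU).antisymm <|
    convexHull_min (bilinearGraph_subset_mccormickSet xL xU yL yU) (convex_mccormickSet xL xU yL yU)

end OrderedField

/-- Al-Khayyal–Falk: the McCormick set equals the convex hull of
the bilinear graph over the box. -/
theorem mccormick_eq_convexHull_bilinear_graph
    (xL xU yL yU : ℝ) (hx : xL ≤ xU) (hy : yL ≤ yU) :
    {p : ℝ × ℝ × ℝ |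
        xL ≤ p.1 ∧ p.1 ≤ xU ∧ yL ≤ p.2.1 ∧ p.2.1 ≤ yU ∧
        p.2.2 ≥ xL * p.2.1 + yL * p.1 - xL * yL ∧
        p.2.2 ≥ xU * p.2.1 + yU * p.1 - xU * yU ∧
        p.2.2 ≤ xU * p.2.1 + yL * p.1 - xU * yL ∧
        p.2.2 ≤ xL * p.2.1 + yU * p.1 - xL * yU} =
      convexHull ℝ
        {p : ℝ × ℝ × ℝ |
          ∃ x ∈ Set.Icc xL xU, ∃ y ∈ Set.Icc yL yU, p = (x, y, x * y)} :=
  mccormick_eq_convexHull_bilinear_graph_general xL xU yL yU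
end

section
/- Quadratic convergence of the tightening step: let c > 0, ε ∈ [0, 1], m* > 0 and τ* > 0, and set the tightened bounds m_L = (1 − ε)·m*, m_U = (1 + ε)·m*, τ_L = (1 − ε)·τ*, τ_U = (1 + ε)·τ*. If m ∈ [m_L, m_U], τ ∈ [τ_L, τ_U], and w satisfies the four McCormick envelope inequalities for the product c·m·τ with these bounds, then |w − c·m·τ| ≤ c·ε²·m*·τ*. -/
/-!
In terms of the distances `p, q` from `x` and `r, s` from `y` to the two ends of their intervals,
the product `x * y` exceeds the McCormick underestimator by exactly `min (p * r) (q * s)`, and the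
overestimator exceeds it by `min (q * r) (p * s)`. The square of the first minimum is at most
`(p * r) * (q * s) = (p * s) * (q * r)`, so by AM-GM twice the minimum is at most `p * s + q * r`.
Twice the minimum is also at most `p * r + q * s`, and the two right-hand sides add up to
`(p + q) * (r + s)`. The second minimum is the first with `p` and `q` interchanged, so each gap is
at most a quarter of the area of the box, which is quadratic in `ε` for the tightened bounds.
-/

open Set

section McCormick

variable {R : Type*} [CommRing R] [LinearOrder R]

/-- The McCormick convex underestimator of the product `x * y` on the box
`[xL, xU] × [yL, yU]`: the larger of its two supporting planes. -/
def mccormickUnder (xL xU yL yU x y : R) : R :=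
  max (xL * y + yL * x - xL * yL) (xU * y + yU * x - xU * yU)

/-- The McCormick concave overestimator of the product `x * y` on the box
`[xL, xU] × [yL, yU]`: the smaller of its two supporting planes. -/
def mccormickOver (xL xU yL yU x y : R) : R :=
  min (xU * y + yL * x - xU * yL) (xL * y + yU * x - xL * yU)

variable [IsStrictOrderedRing R]

theorem two_mul_min_mul_le_add_mul {p q r s : R}
    (hp : 0 ≤ p) (hq : 0 ≤ q) (hr : 0 ≤ r) (hs : 0 ≤ s) :
    2 * min (p * r) (q * s) ≤ p * s + q * r := by
  have hmin : 0 ≤ min (p * r) (q * s) := le_min (mul_nonneg hp hr) (mul_nonneg hq hs)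
  refine le_of_sq_le_sq ?_ (add_nonneg (mul_nonneg hp hs) (mul_nonneg hq hr))
  calc (2 * min (p * r) (q * s)) ^ 2
      = 4 * (min (p * r) (q * s) * min (p * r) (q * s)) := by ring
    _ ≤ 4 * ((p * r) * (q * s)) :=
        mul_le_mul_of_nonneg_left
          (mul_le_mul (min_le_left _ _) (min_le_right _ _) hmin (mul_nonneg hp hr)) zero_le_four
    _ = 4 * (p * s) * (q * r) := by ring
    _ ≤ (p * s + q * r) ^ 2 := four_mul_le_sq_add _ _

theorem four_mul_min_mul_le_add_mul_add {p q r s : R}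
    (hp : 0 ≤ p) (hq : 0 ≤ q) (hr : 0 ≤ r) (hs : 0 ≤ s) :
    4 * min (p * r) (q * s) ≤ (p + q) * (r + s) := by
  linarith [two_mul_min_mul_le_add_mul hp hq hr hs,
    min_le_left (p * r) (q * s), min_le_right (p * r) (q * s)]

theorem mul_sub_mccormickUnder_eq_min (xL xU yL yU x y : R) :
    x * y - mccormickUnder xL xU yL yU x y =
      min ((x - xL) * (y - yL)) ((xU - x) * (yU - y)) := by
  rw [mccormickUnder, ← min_sub_sub_left]
  congr 1 <;> ring

theorem mccormickOver_sub_mul_eq_min (xL xU yL yU x y : R) :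
    mccormickOver xL xU yL yU x y - x * y =
      min ((xU - x) * (y - yL)) ((x - xL) * (yU - y)) := by
  rw [mccormickOver, ← min_sub_sub_right]
  congr 1 <;> ring

variable {xL xU yL yU x y w : R}

theorem four_mul_mul_sub_mccormickUnder_le (hx : x ∈ Icc xL xU) (hy : y ∈ Icc yL yU) :
    4 * (x * y - mccormickUnder xL xU yL yU x y) ≤ (xU - xL) * (yU - yL) := by
  rw [mul_sub_mccormickUnder_eq_min]
  refine (four_mul_min_mul_le_add_mul_add (sub_nonneg.2 hx.1) (sub_nonneg.2 hx.2)
    (sub_nonneg.2 hy.1) (sub_nonneg.2 hy.2)).trans_eq ?_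
  ring

theorem four_mul_mccormickOver_sub_mul_le (hx : x ∈ Icc xL xU) (hy : y ∈ Icc yL yU) :
    4 * (mccormickOver xL xU yL yU x y - x * y) ≤ (xU - xL) * (yU - yL) := by
  rw [mccormickOver_sub_mul_eq_min]
  refine (four_mul_min_mul_le_add_mul_add (sub_nonneg.2 hx.2) (sub_nonneg.2 hx.1)
    (sub_nonneg.2 hy.1) (sub_nonneg.2 hy.2)).trans_eq ?_
  ring

theorem four_mul_abs_sub_mul_le_of_mem_Icc_mccormick
    (hx : x ∈ Icc xL xU) (hy : y ∈ Icc yL yU)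
    (hw : w ∈ Icc (mccormickUnder xL xU yL yU x y) (mccormickOver xL xU yL yU x y)) :
    4 * |w - x * y| ≤ (xU - xL) * (yU - yL) := by
  rcases abs_cases (w - x * y) with ⟨habs, _⟩ | ⟨habs, _⟩ <;> rw [habs]
  · linarith [four_mul_mccormickOver_sub_mul_le hx hy, hw.2]
  · linarith [four_mul_mul_sub_mccormickUnder_le hx hy, hw.1]

theorem mccormick_tightening_quadratic_general {c mL mU τL τU m τ w : R} (hc : 0 ≤ c)
    (hm : m ∈ Icc mL mU) (hτ : τ ∈ Icc τL τU)
    (h_under_L : c * (mL * τ + τL * m - mL * τL) ≤ w)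
    (h_under_U : c * (mU * τ + τU * m - mU * τU) ≤ w)
    (h_over_UL : w ≤ c * (mU * τ + τL * m - mU * τL))
    (h_over_LU : w ≤ c * (mL * τ + τU * m - mL * τU)) :
    4 * |w - c * m * τ| ≤ c * ((mU - mL) * (τU - τL)) := by
  -- The factor `c` is absorbed into the first variable: `c * m` ranges over `[c * mL, c * mU]`.
  have hcm : c * m ∈ Icc (c * mL) (c * mU) :=
    ⟨mul_le_mul_of_nonneg_left hm.1 hc, mul_le_mul_of_nonneg_left hm.2 hc⟩
  have h_under : mccormickUnder (c * mL) (c * mU) τL τU (c * m) τ ≤ w :=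
    max_le (by linarith) (by linarith)
  have h_over : w ≤ mccormickOver (c * mL) (c * mU) τL τU (c * m) τ :=
    le_min (by linarith) (by linarith)
  calc 4 * |w - c * m * τ| ≤ (c * mU - c * mL) * (τU - τL) :=
        four_mul_abs_sub_mul_le_of_mem_Icc_mccormick hcm hτ ⟨h_under, h_over⟩
    _ = c * ((mU - mL) * (τU - τL)) := by ring

end McCormick

/-- quadratic convergence of the tightening step. -/
theorem mccormick_tightening_quadratic
    (c ε mStar τStar mL mU τL τU m τ w : ℝ)
    (hc : 0 < c) (hε0 : 0 ≤ ε) (hε1 : ε ≤ 1)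
    (hmStar : 0 < mStar) (hτStar : 0 < τStar)
    (hmL : mL = (1 - ε) * mStar) (hmU : mU = (1 + ε) * mStar)
    (hτL : τL = (1 - ε) * τStar) (hτU : τU = (1 + ε) * τStar)
    (hm1 : mL ≤ m) (hm2 : m ≤ mU) (hτ1 : τL ≤ τ) (hτ2 : τ ≤ τU)
    (h1 : w ≥ c * (mL * τ + τL * m - mL * τL))
    (h2 : w ≥ c * (mU * τ + τU * m - mU * τU))
    (h3 : w ≤ c * (mU * τ + τL * m - mU * τL))
    (h4 : w ≤ c * (mL * τ + τU * m - mL * τU)) :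
    |w - c * m * τ| ≤ c * ε ^ 2 * mStar * τStar := by
  subst hmL hmU hτL hτU
  linarith [mccormick_tightening_quadratic_general hc.le ⟨hm1, hm2⟩ ⟨hτ1, hτ2⟩ h1 h2 h3 h4]
end
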